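/- Let p > 1 and let μ, ν : {1,2,...} → (0,∞) be positive weights such that B²_{μ,ν} := sup_{r≥1} (∑_{x=1}^r μ(x)) · (∑_{x=r+1}^∞ ν(x)^{-1/(p-1)})^{p-1} is finite. Then for every finitely supported function f : {1,2,...} → ℝ with ∑_{x=1}^∞ f(x) = 0, one has ∑_{x=1}^∞ |∑_{y=1}^x f(y)|^p μ(x) ≤ (p^p/(p-1)^{p-1}) · B²_{μ,ν} · ∑_{x=1}^∞ |f(x)|^p ν(x). -/

import Mathlib

open scoped ENNReal

/-!
Since the total sum vanishes, `|∑_{y ≤ x} f y|` is the limit of `|∑_{x < y ≤ N} f y|`, so it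
suffices to prove the dual Hardy inequality for truncated tail sums. With `w = ν ^ (-1 / (p - 1))`
and `T j = ∑_{i ≥ j} w i`, Hölder's inequality with the test weight `w * T ^ (a - 1)` bounds the
`p`-th power of a tail sum; the sum of that weight telescopes, `x ^ a` being concave. After
exchanging the order of summation, the inner sum is controlled by the bound on
`(∑_{i ≤ k} μ i) * T (k + 1) ^ (p - 1)` and a second telescoping, now in the partial sums of `μ`.
The resulting constant `a⁻¹ ^ (p - 1) * (1 - a)⁻¹` is smallest at `a = (p - 1) / p`.
-/

open Finset Filter Topology

lemma rpow_add_mul_rpow_sub_one_le {a s x : ℝ} (ha : 0 < a) (ha1 : a ≤ 1)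
    (hs : 0 ≤ s) (hx : 0 ≤ x) :
    s ^ a + a * (x * (s + x) ^ (a - 1)) ≤ (s + x) ^ a := by
  rcases (add_nonneg hs hx).eq_or_lt' with h | ht
  · obtain ⟨rfl, rfl⟩ := (add_eq_zero_iff_of_nonneg hs hx).1 h
    simp
  · set t := s + x
    have bernoulli : (s / t) ^ a ≤ 1 + a * (s / t - 1) := by
      simpa using rpow_one_add_le_one_add_mul_self (s := s / t - 1)
        (by linarith [div_nonneg hs ht.le]) ha.le ha1
    have hxt : s / t - 1 = -(x / t) := by rw [div_sub_one ht.ne', ← neg_div]; congr 1; simp [t]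
    rw [Real.div_rpow hs ht.le, div_le_iff₀ (Real.rpow_pos_of_pos ht a), hxt] at bernoulli
    calc s ^ a + a * (x * t ^ (a - 1)) = s ^ a + a * (x / t) * t ^ a := by
          rw [Real.rpow_sub_one ht.ne']; ring
      _ ≤ t ^ a := by linarith

lemma sum_range_mul_rpow_sum_range_le {a : ℝ} (ha : 0 < a) (ha1 : a ≤ 1) {m : ℕ → ℝ}
    (hm : ∀ i, 0 ≤ m i) (n : ℕ) :
    ∑ k ∈ range n, m k * (∑ i ∈ range (k + 1), m i) ^ (a - 1) ≤
      a⁻¹ * (∑ i ∈ range n, m i) ^ a := by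
  induction n with
  | zero => simp [Real.zero_rpow ha.ne']
  | succ n ih =>
    have step := rpow_add_mul_rpow_sub_one_le ha ha1
      (sum_nonneg fun i (_ : i ∈ range n) ↦ hm i) (hm n)
    rw [← sum_range_succ] at step
    rw [sum_range_succ]
    rw [inv_mul_eq_div, le_div_iff₀ ha] at ih ⊢
    linarith

lemma sum_Ico_mul_rpow_sum_Ico_le {a : ℝ} (ha : 0 < a) (ha1 : a ≤ 1) {w : ℕ → ℝ}
    (hw : ∀ i, 0 ≤ w i) {k N : ℕ} (hk : k ≤ N) :
    ∑ j ∈ Ico k N, w j * (∑ i ∈ Ico j N, w i) ^ (a - 1) ≤ a⁻¹ * (∑ i ∈ Ico k N, w i) ^ a := by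
  induction hk using Nat.decreasingInduction with
  | self => simp [Real.zero_rpow ha.ne']
  | of_succ k hk ih =>
    have step := rpow_add_mul_rpow_sub_one_le ha ha1
      (sum_nonneg fun i (_ : i ∈ Ico (k + 1) N) ↦ hw i) (hw k)
    rw [add_comm _ (w k), ← sum_eq_sum_Ico_succ_bot hk] at step
    rw [sum_eq_sum_Ico_succ_bot hk]
    rw [inv_mul_eq_div, le_div_iff₀ ha] at ih ⊢
    linarith

lemma rpow_sum_le_rpow_sum_mul_sum {ι : Type*} (s : Finset ι) {p : ℝ} (hp : 1 ≤ p)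
    {u g : ι → ℝ} (hu : ∀ i ∈ s, 0 < u i) (hg : ∀ i ∈ s, 0 ≤ g i) :
    (∑ i ∈ s, g i) ^ p ≤ (∑ i ∈ s, u i) ^ (p - 1) * ∑ i ∈ s, g i ^ p * u i ^ (1 - p) := by
  rcases s.eq_empty_or_nonempty with rfl | hs
  · simp [Real.zero_rpow (by linarith : p ≠ 0)]
  set U := ∑ i ∈ s, u i
  have hU : 0 < U := sum_pos hu hs
  calc (∑ i ∈ s, g i) ^ p = (∑ i ∈ s, u i / U * (U * (g i / u i))) ^ p := by
        congr 1
        refine sum_congr rfl fun i hi ↦ ?_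
        have := hu i hi
        field_simp
    _ ≤ ∑ i ∈ s, u i / U * (U * (g i / u i)) ^ p :=
        Real.rpow_arith_mean_le_arith_mean_rpow s _ _ (fun i hi ↦ div_nonneg (hu i hi).le hU.le)
          (by rw [← sum_div, div_self hU.ne'])
          (fun i hi ↦ mul_nonneg hU.le (div_nonneg (hg i hi) (hu i hi).le)) hp
    _ = U ^ (p - 1) * ∑ i ∈ s, g i ^ p * u i ^ (1 - p) := by
        rw [mul_sum]
        refine sum_congr rfl fun i hi ↦ ?_
        have hui := hu i hi
        rw [Real.mul_rpow hU.le (div_nonneg (hg i hi) hui.le), Real.div_rpow (hg i hi) hui.le,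
          Real.rpow_sub_one hU.ne', Real.rpow_sub hui, Real.rpow_one]
        ring

lemma mul_rpow_one_sub_le_of_mul_le {θ B x M S : ℝ} (hθ : θ ≤ 1) (hx : 0 ≤ x) (hxM : x ≤ M)
    (hS : 0 ≤ S) (hB : M * S ≤ B) :
    x * S ^ (1 - θ) ≤ B ^ (1 - θ) * (x * M ^ (θ - 1)) := by
  have hM : 0 ≤ M := hx.trans hxM
  rcases hM.eq_or_lt' with rfl | hpos
  · simp [le_antisymm hxM hx]
  · have hB0 : 0 ≤ B := (mul_nonneg hM hS).trans hB
    calc x * S ^ (1 - θ) ≤ x * (B / M) ^ (1 - θ) := by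
          gcongr
          exact (le_div_iff₀' hpos).2 hB
      _ = B ^ (1 - θ) * (x * M ^ (θ - 1)) := by
          rw [Real.div_rpow hB0 hM, ← neg_sub 1 θ, Real.rpow_neg hM]; ring

lemma rpow_mul_sum_range_mul_rpow_le {θ B : ℝ} (hθ : 0 < θ) (hθ1 : θ ≤ 1) {m S : ℕ → ℝ} {j : ℕ}
    (hm : ∀ i, 0 ≤ m i) (hS : ∀ k, 0 ≤ S k)
    (hB : ∀ k ≤ j, (∑ i ∈ range (k + 1), m i) * S k ≤ B) :
    S j ^ θ * ∑ k ∈ range (j + 1), m k * S k ^ (1 - θ) ≤ θ⁻¹ * B := by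
  set M : ℕ → ℝ := fun k ↦ ∑ i ∈ range (k + 1), m i
  have hM (k : ℕ) : 0 ≤ M k := sum_nonneg fun i _ ↦ hm i
  have hB0 : 0 ≤ B := (mul_nonneg (hM j) (hS j)).trans (hB j le_rfl)
  calc S j ^ θ * ∑ k ∈ range (j + 1), m k * S k ^ (1 - θ)
      ≤ S j ^ θ * ∑ k ∈ range (j + 1), B ^ (1 - θ) * (m k * M k ^ (θ - 1)) := by
        refine mul_le_mul_of_nonneg_left (sum_le_sum fun k hk ↦ ?_) (Real.rpow_nonneg (hS j) θ)
        exact mul_rpow_one_sub_le_of_mul_le hθ1 (hm k)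
          (single_le_sum (fun i _ ↦ hm i) (self_mem_range_succ k)) (hS k) (hB k (by grind))
    _ ≤ S j ^ θ * (B ^ (1 - θ) * (θ⁻¹ * M j ^ θ)) := by
        rw [← mul_sum]
        gcongr
        · exact Real.rpow_nonneg (hS j) θ
        · exact sum_range_mul_rpow_sum_range_le hθ hθ1 hm (j + 1)
    _ = θ⁻¹ * (B ^ (1 - θ) * (M j * S j) ^ θ) := by
        rw [Real.mul_rpow (hM j) (hS j)]; ring
    _ ≤ θ⁻¹ * (B ^ (1 - θ) * B ^ θ) := by
        have := mul_nonneg (hM j) (hS j)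
        gcongr
        exact hB j le_rfl
    _ = θ⁻¹ * B := by
        rw [← Real.rpow_add_of_nonneg hB0 (by linarith) hθ.le]; simp

lemma rpow_sum_Ico_le {p a : ℝ} (hp : 1 ≤ p) (ha : 0 < a) (ha1 : a ≤ 1) {w g : ℕ → ℝ}
    (hw : ∀ j, 0 < w j) (hg : ∀ j, 0 ≤ g j) {k N : ℕ} (hk : k ≤ N) :
    (∑ j ∈ Ico k N, g j) ^ p ≤
      a⁻¹ ^ (p - 1) * ((∑ i ∈ Ico k N, w i) ^ (p - 1)) ^ a *
        ∑ j ∈ Ico k N, g j ^ p * w j ^ (1 - p) * ((∑ i ∈ Ico j N, w i) ^ (p - 1)) ^ (1 - a) := by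
  set T : ℕ → ℝ := fun k ↦ ∑ i ∈ Ico k N, w i
  have hT (j : ℕ) : 0 ≤ T j := sum_nonneg fun i _ ↦ (hw i).le
  set u : ℕ → ℝ := fun j ↦ w j * T j ^ (a - 1)
  have hu (j : ℕ) (hj : j ∈ Ico k N) : 0 < u j :=
    mul_pos (hw j) <| Real.rpow_pos_of_pos
      (sum_pos (fun i _ ↦ hw i) (nonempty_Ico.2 (mem_Ico.1 hj).2)) _
  have sum_u_le : (∑ j ∈ Ico k N, u j) ^ (p - 1) ≤ a⁻¹ ^ (p - 1) * (T k ^ (p - 1)) ^ a := by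
    calc (∑ j ∈ Ico k N, u j) ^ (p - 1) ≤ (a⁻¹ * T k ^ a) ^ (p - 1) :=
          Real.rpow_le_rpow (sum_nonneg fun j hj ↦ (hu j hj).le)
            (sum_Ico_mul_rpow_sum_Ico_le ha ha1 (fun i ↦ (hw i).le) hk) (sub_nonneg.2 hp)
      _ = a⁻¹ ^ (p - 1) * (T k ^ (p - 1)) ^ a := by
          rw [Real.mul_rpow (inv_nonneg.2 ha.le) (Real.rpow_nonneg (hT k) _),
            ← Real.rpow_mul (hT k), ← Real.rpow_mul (hT k), mul_comm a]
  have u_rpow (j : ℕ) : u j ^ (1 - p) = w j ^ (1 - p) * (T j ^ (p - 1)) ^ (1 - a) := by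
    rw [Real.mul_rpow (hw j).le (Real.rpow_nonneg (hT j) _), ← Real.rpow_mul (hT j),
      ← Real.rpow_mul (hT j)]
    ring_nf
  calc (∑ j ∈ Ico k N, g j) ^ p
      ≤ (∑ j ∈ Ico k N, u j) ^ (p - 1) * ∑ j ∈ Ico k N, g j ^ p * u j ^ (1 - p) :=
        rpow_sum_le_rpow_sum_mul_sum _ hp hu fun j _ ↦ hg j
    _ = (∑ j ∈ Ico k N, u j) ^ (p - 1) *
          ∑ j ∈ Ico k N, g j ^ p * w j ^ (1 - p) * (T j ^ (p - 1)) ^ (1 - a) := by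
        simp only [u_rpow, mul_assoc]
    _ ≤ a⁻¹ ^ (p - 1) * (T k ^ (p - 1)) ^ a *
          ∑ j ∈ Ico k N, g j ^ p * w j ^ (1 - p) * (T j ^ (p - 1)) ^ (1 - a) := by
        refine mul_le_mul_of_nonneg_right sum_u_le (sum_nonneg fun j _ ↦ ?_)
        have := hg j; have := hw j; have := hT j
        positivity

lemma sum_rpow_sum_Ico_mul_le_inv_rpow_mul {p a B : ℝ} (hp : 1 ≤ p) (ha : 0 < a) (ha1 : a < 1)
    {m w g : ℕ → ℝ} {N : ℕ} (hm : ∀ k, 0 ≤ m k) (hw : ∀ k, 0 < w k) (hg : ∀ k, 0 ≤ g k)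
    (hB : ∀ k < N, (∑ i ∈ range (k + 1), m i) * (∑ j ∈ Ico k N, w j) ^ (p - 1) ≤ B) :
    ∑ k ∈ range N, (∑ j ∈ Ico k N, g j) ^ p * m k ≤
      a⁻¹ ^ (p - 1) * (1 - a)⁻¹ * B * ∑ j ∈ range N, g j ^ p * w j ^ (1 - p) := by
  set S : ℕ → ℝ := fun k ↦ (∑ j ∈ Ico k N, w j) ^ (p - 1)
  have hS (k : ℕ) : 0 ≤ S k := Real.rpow_nonneg (sum_nonneg fun j _ ↦ (hw j).le) _
  have hterm (j : ℕ) : 0 ≤ a⁻¹ ^ (p - 1) * (g j ^ p * w j ^ (1 - p)) := by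
    have := hg j; have := hw j
    positivity
  have column_le (j : ℕ) (hj : j ∈ range N) :
      S j ^ (1 - a) * ∑ k ∈ range (j + 1), m k * S k ^ a ≤ (1 - a)⁻¹ * B := by
    simpa only [sub_sub_cancel] using rpow_mul_sum_range_mul_rpow_le (sub_pos.2 ha1)
      (sub_le_self 1 ha.le) hm hS fun k hk ↦ hB k (hk.trans_lt (mem_range.1 hj))
  calc ∑ k ∈ range N, (∑ j ∈ Ico k N, g j) ^ p * m k
      ≤ ∑ k ∈ range N, a⁻¹ ^ (p - 1) * S k ^ a *
          (∑ j ∈ Ico k N, g j ^ p * w j ^ (1 - p) * S j ^ (1 - a)) * m k := by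
        gcongr with k hk
        · exact hm k
        · exact rpow_sum_Ico_le hp ha ha1.le hw hg (mem_range.1 hk).le
    _ = ∑ j ∈ range N, a⁻¹ ^ (p - 1) * (g j ^ p * w j ^ (1 - p)) *
          (S j ^ (1 - a) * ∑ k ∈ range (j + 1), m k * S k ^ a) := by
        simp only [mul_sum, sum_mul, range_eq_Ico]
        rw [sum_Ico_Ico_comm]
        refine sum_congr rfl fun j _ ↦ sum_congr rfl fun k _ ↦ ?_
        ring
    _ ≤ ∑ j ∈ range N, a⁻¹ ^ (p - 1) * (g j ^ p * w j ^ (1 - p)) * ((1 - a)⁻¹ * B) :=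
        sum_le_sum fun j hj ↦ mul_le_mul_of_nonneg_left (column_le j hj) (hterm j)
    _ = a⁻¹ ^ (p - 1) * (1 - a)⁻¹ * B * ∑ j ∈ range N, g j ^ p * w j ^ (1 - p) := by
        rw [← sum_mul, ← mul_sum]; ring

theorem sum_rpow_sum_Ico_mul_le {p B : ℝ} (hp : 1 < p) {m n g : ℕ → ℝ} {N : ℕ}
    (hm : ∀ k, 0 ≤ m k) (hn : ∀ k, 0 < n k) (hg : ∀ k, 0 ≤ g k)
    (hB : ∀ k < N, (∑ i ∈ range (k + 1), m i) *
      (∑ j ∈ Ico k N, n j ^ (-1 / (p - 1))) ^ (p - 1) ≤ B) :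
    ∑ k ∈ range N, (∑ j ∈ Ico k N, g j) ^ p * m k ≤
      p ^ p / (p - 1) ^ (p - 1) * B * ∑ j ∈ range N, g j ^ p * n j := by
  have hp0 : 0 < p := by linarith
  have hp1 : 0 < p - 1 := by linarith
  have rpow_dual (j : ℕ) : (n j ^ (-1 / (p - 1))) ^ (1 - p) = n j := by
    have : -1 / (p - 1) * (1 - p) = 1 := by field_simp; ring
    rw [← Real.rpow_mul (hn j).le, this, Real.rpow_one]
  have const_eq : ((p - 1) / p)⁻¹ ^ (p - 1) * (1 - (p - 1) / p)⁻¹ = p ^ p / (p - 1) ^ (p - 1) := by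
    have : 1 - (p - 1) / p = p⁻¹ := by field_simp; ring
    rw [this, inv_inv, inv_div, Real.div_rpow hp0.le hp1.le, div_mul_eq_mul_div,
      ← Real.rpow_add_one hp0.ne', sub_add_cancel]
  simpa only [rpow_dual, const_eq] using sum_rpow_sum_Ico_mul_le_inv_rpow_mul (a := (p - 1) / p)
    hp.le (div_pos hp1 hp0) ((div_lt_one hp0).2 (by linarith)) hm
    (fun k ↦ Real.rpow_pos_of_pos (hn k) _) hg hB

lemma sum_mul_rpow_sum_Ico_le_toReal {q : ℝ} (hq : 0 ≤ q) {m w : ℕ → ℝ} (hm : ∀ i, 0 ≤ m i)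
    (hw : ∀ i, 0 ≤ w i) {B : ℝ≥0∞} (hBfin : B ≠ ⊤) {k : ℕ}
    (hB : (∑ i ∈ range (k + 1), ENNReal.ofReal (m i)) *
      (∑' x, ENNReal.ofReal (w (x + k))) ^ q ≤ B) (N : ℕ) :
    (∑ i ∈ range (k + 1), m i) * (∑ j ∈ Ico k N, w j) ^ q ≤ B.toReal := by
  have hM : 0 ≤ ∑ i ∈ range (k + 1), m i := sum_nonneg fun i _ ↦ hm i
  have hT : 0 ≤ ∑ j ∈ Ico k N, w j := sum_nonneg fun i _ ↦ hw i
  refine (ENNReal.ofReal_le_iff_le_toReal hBfin).1 (le_trans ?_ hB)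
  rw [ENNReal.ofReal_mul hM, ← ENNReal.ofReal_rpow_of_nonneg hT hq,
    ENNReal.ofReal_sum_of_nonneg fun i _ ↦ hm i, ENNReal.ofReal_sum_of_nonneg fun i _ ↦ hw i,
    sum_Ico_eq_sum_range]
  gcongr
  simpa only [add_comm k] using
    ENNReal.sum_le_tsum (f := fun x ↦ ENNReal.ofReal (w (x + k))) (range (N - k))

lemma sum_rpow_abs_sum_Ico_mul_le {p B : ℝ} (hp : 1 < p) {m n f : ℕ → ℝ} {K N : ℕ} (hKN : K ≤ N)
    (hm : ∀ k, 0 ≤ m k) (hn : ∀ k, 0 < n k)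
    (hB : ∀ k < N, (∑ i ∈ range (k + 1), m i) *
      (∑ j ∈ Ico k N, n j ^ (-1 / (p - 1))) ^ (p - 1) ≤ B) :
    ∑ k ∈ range K, |∑ j ∈ Ico k N, f j| ^ p * m k ≤
      p ^ p / (p - 1) ^ (p - 1) * B * ∑ j ∈ range N, |f j| ^ p * n j := by
  calc ∑ k ∈ range K, |∑ j ∈ Ico k N, f j| ^ p * m k
      ≤ ∑ k ∈ range N, |∑ j ∈ Ico k N, f j| ^ p * m k :=
        sum_le_sum_of_subset_of_nonneg (range_subset_range.2 hKN) fun k _ _ ↦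
          mul_nonneg (Real.rpow_nonneg (abs_nonneg _) _) (hm k)
    _ ≤ ∑ k ∈ range N, (∑ j ∈ Ico k N, |f j|) ^ p * m k := by
        gcongr with k
        · exact hm k
        · exact abs_sum_le_sum_abs _ _
    _ ≤ p ^ p / (p - 1) ^ (p - 1) * B * ∑ j ∈ range N, |f j| ^ p * n j :=
        sum_rpow_sum_Ico_mul_le hp hm hn (fun k ↦ abs_nonneg _) hB

lemma ofReal_sum_rpow_abs_sum_Ico_mul_le {p : ℝ} (hp : 1 < p) {m n : ℕ → ℝ} (f : ℕ → ℝ)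
    {K N : ℕ} (hKN : K ≤ N) {B : ℝ≥0∞} (hm : ∀ k, 0 ≤ m k) (hn : ∀ k, 0 < n k) (hBfin : B ≠ ⊤)
    (hB : ∀ k, (∑ i ∈ range (k + 1), ENNReal.ofReal (m i)) *
      (∑' x, ENNReal.ofReal (n (x + k) ^ (-1 / (p - 1)))) ^ (p - 1) ≤ B) :
    ENNReal.ofReal (∑ k ∈ range K, |∑ j ∈ Ico k N, f j| ^ p * m k) ≤
      ENNReal.ofReal (p ^ p / (p - 1) ^ (p - 1)) * B * ∑' j, ENNReal.ofReal (|f j| ^ p * n j) := by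
  have hp1 : 0 < p - 1 := by linarith
  have hC : 0 ≤ p ^ p / (p - 1) ^ (p - 1) :=
    div_nonneg (Real.rpow_nonneg (by linarith) _) (Real.rpow_nonneg hp1.le _)
  have hterm (j : ℕ) : 0 ≤ |f j| ^ p * n j :=
    mul_nonneg (Real.rpow_nonneg (abs_nonneg _) _) (hn j).le
  calc ENNReal.ofReal (∑ k ∈ range K, |∑ j ∈ Ico k N, f j| ^ p * m k)
      ≤ ENNReal.ofReal (p ^ p / (p - 1) ^ (p - 1) * B.toReal *
          ∑ j ∈ range N, |f j| ^ p * n j) :=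
        ENNReal.ofReal_le_ofReal <| sum_rpow_abs_sum_Ico_mul_le hp hKN hm hn fun k _ ↦
          sum_mul_rpow_sum_Ico_le_toReal hp1.le hm (fun j ↦ (Real.rpow_pos_of_pos (hn j) _).le)
            hBfin (hB k) N
    _ = ENNReal.ofReal (p ^ p / (p - 1) ^ (p - 1)) * B *
          ∑ j ∈ range N, ENNReal.ofReal (|f j| ^ p * n j) := by
        rw [ENNReal.ofReal_mul (mul_nonneg hC ENNReal.toReal_nonneg), ENNReal.ofReal_mul hC,
          ENNReal.ofReal_toReal hBfin, ENNReal.ofReal_sum_of_nonneg fun j _ ↦ hterm j]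
    _ ≤ ENNReal.ofReal (p ^ p / (p - 1) ^ (p - 1)) * B *
          ∑' j, ENNReal.ofReal (|f j| ^ p * n j) := by
        gcongr
        exact ENNReal.sum_le_tsum _

lemma tendsto_abs_sum_Ico_add_one {f : ℕ → ℝ}
    (hf : Tendsto (fun N ↦ ∑ i ∈ range N, f i) atTop (𝓝 0)) (k : ℕ) :
    Tendsto (fun N ↦ |∑ j ∈ Ico k N, f (j + 1)|) atTop (𝓝 |∑ i ∈ range (k + 1), f i|) := by
  have sub_tendsto : Tendsto (fun N ↦ |∑ i ∈ range (N + 1), f i - ∑ i ∈ range (k + 1), f i|) atTop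
      (𝓝 |∑ i ∈ range (k + 1), f i|) := by
    simpa using (((tendsto_add_atTop_iff_nat 1).2 hf).sub_const _).abs
  refine sub_tendsto.congr' ?_
  filter_upwards [eventually_ge_atTop k] with N hN
  rw [sum_Ico_add' f k N 1, sum_Ico_eq_sub f (by omega)]

theorem tsum_rpow_abs_sum_range_mul_le {p : ℝ} (hp : 1 < p) {m n f : ℕ → ℝ} {B : ℝ≥0∞}
    (hm : ∀ k, 0 ≤ m k) (hn : ∀ k, 0 < n k) (hBfin : B ≠ ⊤)
    (hB : ∀ k, (∑ i ∈ range (k + 1), ENNReal.ofReal (m i)) *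
      (∑' x, ENNReal.ofReal (n (x + k + 1) ^ (-1 / (p - 1)))) ^ (p - 1) ≤ B)
    (hf : Tendsto (fun N ↦ ∑ i ∈ range N, f i) atTop (𝓝 0)) :
    ∑' k, ENNReal.ofReal (|∑ i ∈ range (k + 1), f i| ^ p * m k) ≤
      ENNReal.ofReal (p ^ p / (p - 1) ^ (p - 1)) * B * ∑' k, ENNReal.ofReal (|f k| ^ p * n k) := by
  refine ENNReal.tsum_le_of_sum_range_le fun K ↦ ?_
  rw [← ENNReal.ofReal_sum_of_nonneg fun k _ ↦
    mul_nonneg (Real.rpow_nonneg (abs_nonneg _) _) (hm k)]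
  have truncation_tendsto := ENNReal.tendsto_ofReal <| tendsto_finsetSum (range K) fun k _ ↦
    ((tendsto_abs_sum_Ico_add_one hf k).rpow_const (.inr (by linarith : 0 ≤ p))).mul_const (m k)
  refine le_of_tendsto truncation_tendsto ?_
  filter_upwards [eventually_ge_atTop K] with N hN
  calc _ ≤ ENNReal.ofReal (p ^ p / (p - 1) ^ (p - 1)) * B *
          ∑' k, ENNReal.ofReal (|f (k + 1)| ^ p * n (k + 1)) :=
        ofReal_sum_rpow_abs_sum_Ico_mul_le hp (fun j ↦ f (j + 1)) hN hm (fun k ↦ hn (k + 1))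
          hBfin hB
    _ ≤ ENNReal.ofReal (p ^ p / (p - 1) ^ (p - 1)) * B *
          ∑' k, ENNReal.ofReal (|f k| ^ p * n k) :=
        mul_le_mul_right (ENNReal.tsum_comp_le_tsum_of_injective (add_left_injective 1)
          fun k ↦ ENNReal.ofReal (|f k| ^ p * n k)) _

lemma sum_Icc_one_eq_sum_range {M : Type*} [AddCommMonoid M] (f : ℕ → M) (n : ℕ) :
    ∑ x ∈ Icc 1 n, f x = ∑ i ∈ range n, f (i + 1) := by
  rw [range_eq_Ico, sum_Ico_add' f 0 n 1]
  rfl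

theorem stmt_2_general (p : ℝ) (hp : 1 < p) (μ ν : ℕ → ℝ)
    (hμ : ∀ n, 1 ≤ n → 0 ≤ μ n) (hν : ∀ n, 1 ≤ n → 0 < ν n)
    (B2 : ℝ≥0∞)
    (hB2 : B2 = ⨆ r : ℕ,
      (∑ x ∈ Finset.Icc 1 (r + 1), ENNReal.ofReal (μ x)) *
        (∑' x : ℕ, ENNReal.ofReal (ν (x + (r + 2)) ^ (-1 / (p - 1)))) ^ (p - 1))
    (hB2fin : B2 ≠ ⊤)
    (f : ℕ → ℝ) (hf : Tendsto (fun N ↦ ∑ x ∈ Finset.Icc 1 N, f x) atTop (𝓝 0)) :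
    ∑' x : ℕ, ENNReal.ofReal (|∑ y ∈ Finset.Icc 1 (x + 1), f y| ^ p * μ (x + 1)) ≤
      ENNReal.ofReal (p ^ p / (p - 1) ^ (p - 1)) * B2 *
        ∑' x : ℕ, ENNReal.ofReal (|f (x + 1)| ^ p * ν (x + 1)) := by
  simp only [sum_Icc_one_eq_sum_range] at hB2 hf ⊢
  refine tsum_rpow_abs_sum_range_mul_le hp (fun k ↦ hμ _ (by omega)) (fun k ↦ hν _ (by omega))
    hB2fin (fun r ↦ ?_) hf
  rw [hB2]
  exact le_iSup_of_le r le_rfl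

/-- Proposition 2.3: if `B²_{μ,ν} < ∞` then the weighted Hardy inequality holds with
constant `p^p/(p-1)^{p-1} · B²_{μ,ν}` for all finitely supported `f` of total sum zero. -/
theorem stmt_2 (p : ℝ) (hp : 1 < p) (μ ν : ℕ → ℝ)
    (hμ : ∀ n, 1 ≤ n → 0 < μ n) (hν : ∀ n, 1 ≤ n → 0 < ν n)
    (B2 : ℝ≥0∞)
    (hB2 : B2 = ⨆ r : ℕ,
      (∑ x ∈ Finset.Icc 1 (r + 1), ENNReal.ofReal (μ x)) *
        (∑' x : ℕ, ENNReal.ofReal (ν (x + (r + 2)) ^ (-1 / (p - 1)))) ^ (p - 1))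
    (hB2fin : B2 ≠ ⊤)
    (f : ℕ → ℝ) (hf : (Function.support f).Finite)
    (hsum : ∑' x : ℕ, f (x + 1) = 0) :
    ∑' x : ℕ, ENNReal.ofReal (|∑ y ∈ Finset.Icc 1 (x + 1), f y| ^ p * μ (x + 1)) ≤
      ENNReal.ofReal (p ^ p / (p - 1) ^ (p - 1)) * B2 *
        ∑' x : ℕ, ENNReal.ofReal (|f (x + 1)| ^ p * ν (x + 1)) := by
  refine stmt_2_general p hp μ ν (fun n hn ↦ (hμ n hn).le) hν B2 hB2 hB2fin f ?_
  simpa only [sum_Icc_one_eq_sum_range, hsum] using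
    ((summable_nat_add_iff 1).2 (summable_of_hasFiniteSupport hf)).hasSum.tendsto_sum_nat
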